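/- Suppose r₁, r₂ ∈ ℝ and f ∈ B^{r₁}_{1,∞}(T) ∩ B^{r₂}_{∞,∞}(T). Then f ∈ H^r(T) for every r < (r₁ + r₂)/2. -/

import Mathlib

open Real Set MeasureTheory

/-- The `n`-th Fourier coefficient `f̂(n) = (1/2π) ∫_{-π}^{π} e^{-iny} f(y) dy`. -/
noncomputable def fc (f : ℝ → ℂ) (n : ℤ) : ℂ :=
  (1 / (2 * π) : ℂ) * ∫ y in (-π : ℝ)..π, Complex.exp (-Complex.I * n * y) * f y

/-- The dyadic cutoffs: `χ_j(ξ) = χ(2^{-j}ξ)` for `j ≥ 1` and `χ₀ = 1 - Σ_{j≥1} χ_j`. -/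
noncomputable def chij (χ : ℝ → ℝ) : ℕ → ℝ → ℝ
  | 0 => fun ξ => 1 - ∑' j : ℕ, χ ((2 : ℝ) ^ (-((j : ℝ) + 1)) * ξ)
  | (j + 1) => fun ξ => χ ((2 : ℝ) ^ (-((j : ℝ) + 1)) * ξ)

/-- The Littlewood–Paley projection `K_j f = Σ_{n∈ℤ} χ_j(|n|) f̂(n) e^{inx}`. -/
noncomputable def LPproj (χ : ℝ → ℝ) (f : ℝ → ℂ) (j : ℕ) (x : ℝ) : ℂ :=
  ∑' n : ℤ, ((chij χ j |(n : ℝ)| : ℝ) : ℂ) * fc f n * Complex.exp (Complex.I * n * x)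

lemma aux_integral_exp (k : ℤ) :
    ∫ x in (-π : ℝ)..π, Complex.exp (Complex.I * k * x) = if k = 0 then (2 * π : ℂ) else 0 := by
  split_ifs with h
  · subst h
    simp
    ring
  · have hk : (Complex.I * k : ℂ) ≠ 0 := mul_ne_zero Complex.I_ne_zero (by exact_mod_cast h)
    rw [integral_exp_mul_complex hk]
    have : Complex.exp (Complex.I * k * (π : ℝ)) = Complex.exp (Complex.I * k * ((-π : ℝ) : ℂ)) := by
      rw [Complex.exp_eq_exp_iff_exists_int]
      exact ⟨k, by push_cast; ring⟩
    rw [this]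
    simp

lemma aux_parseval (S : Finset ℤ) (a : ℤ → ℂ) :
    ∫ x in (-π : ℝ)..π, ‖∑ n ∈ S, a n * Complex.exp (Complex.I * n * x)‖ ^ 2
      = 2 * π * ∑ n ∈ S, ‖a n‖ ^ 2 := by
  have key : ∀ x : ℝ, ((‖∑ n ∈ S, a n * Complex.exp (Complex.I * n * x)‖ ^ 2 : ℝ) : ℂ)
      = ∑ n ∈ S, ∑ m ∈ S, (a n * (starRingEnd ℂ) (a m)) *
          Complex.exp (Complex.I * ((n - m : ℤ) : ℂ) * x) := by
    intro x
    push_cast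
    rw [← Complex.mul_conj', map_sum, Finset.sum_mul_sum]
    refine Finset.sum_congr rfl fun n _ => Finset.sum_congr rfl fun m _ => ?_
    rw [map_mul, ← Complex.exp_conj]
    have : Complex.exp (Complex.I * ((n : ℂ) - m) * x)
        = Complex.exp (Complex.I * n * x) * Complex.exp ((starRingEnd ℂ) (Complex.I * m * x)) := by
      rw [← Complex.exp_add]
      congr 1
      simp
      ring
    rw [this]
    ring
  have : ((∫ x in (-π : ℝ)..π, ‖∑ n ∈ S, a n * Complex.exp (Complex.I * n * x)‖ ^ 2 : ℝ) : ℂ)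
      = ((2 * π * ∑ n ∈ S, ‖a n‖ ^ 2 : ℝ) : ℂ) := by
    rw [← intervalIntegral.integral_ofReal]
    simp_rw [key]
    rw [intervalIntegral.integral_finset_sum]
    · have : ∀ n ∈ S, ∫ x in (-π : ℝ)..π, ∑ m ∈ S, (a n * (starRingEnd ℂ) (a m)) *
          Complex.exp (Complex.I * ((n - m : ℤ) : ℂ) * x) = 2 * π * ‖a n‖ ^ 2 := by
        intro n hn
        rw [intervalIntegral.integral_finset_sum]
        · simp_rw [intervalIntegral.integral_const_mul, aux_integral_exp, sub_eq_zero]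
          rw [Finset.sum_eq_single n]
          · rw [if_pos rfl, Complex.mul_conj']
            ring
          · intro m _ hm
            rw [if_neg (Ne.symm hm), mul_zero]
          · intro h
            exact absurd hn h
        · intro m _
          exact Continuous.intervalIntegrable (by fun_prop) _ _
      rw [Finset.sum_congr rfl this, ← Finset.mul_sum]
      push_cast
      rfl
    · intro n _
      exact Continuous.intervalIntegrable (by fun_prop) _ _
  exact_mod_cast this

section chi
variable {χ : ℝ → ℝ}

lemma aux_chi_supp (hχ : Continuous χ) (hχsupp : tsupport χ = Icc (1 / 2 : ℝ) 2) {ξ : ℝ}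
    (h : χ ξ ≠ 0) : 1 / 2 < ξ ∧ ξ < 2 := by
  have ho : IsOpen (Function.support χ) := by
    exact hχ.isOpen_support
  have hsub : Function.support χ ⊆ interior (Icc (1 / 2 : ℝ) 2) := by
    rw [← hχsupp]
    exact interior_maximal (subset_tsupport χ) ho
  rw [interior_Icc] at hsub
  exact hsub h

lemma aux_two_pow (j : ℕ) : (2 : ℝ) ^ (-(j : ℝ)) = ((2 : ℝ) ^ j)⁻¹ := by
  rw [Real.rpow_neg (by norm_num), Real.rpow_natCast]

lemma aux_chij_succ (j : ℕ) (ξ : ℝ) : chij χ (j + 1) ξ = χ (((2 : ℝ) ^ (j + 1))⁻¹ * ξ) := by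
  have := aux_two_pow (j + 1)
  push_cast at this
  simp only [chij, this]

lemma aux_bound {j : ℕ} {ξ : ℝ} (h : 1 / 2 < ((2 : ℝ) ^ j)⁻¹ * ξ ∧ ((2 : ℝ) ^ j)⁻¹ * ξ < 2) :
    (2 : ℝ) ^ j < 2 * ξ ∧ ξ < 2 * 2 ^ j := by
  have hp : (0 : ℝ) < 2 ^ j := by positivity
  rw [inv_mul_eq_div, lt_div_iff₀ hp, div_lt_iff₀ hp] at h
  constructor <;> linarith [h.1, h.2]

lemma aux_summable (hχ : Continuous χ) (hχsupp : tsupport χ = Icc (1 / 2 : ℝ) 2) (ξ : ℝ) :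
    Summable fun j : ℕ => χ (((2 : ℝ) ^ j)⁻¹ * ξ) := by
  obtain ⟨N, hN⟩ := pow_unbounded_of_one_lt (2 * ξ) (one_lt_two)
  refine summable_of_ne_finset_zero (s := Finset.range N) fun j hj => ?_
  by_contra h
  have := (aux_bound (aux_chi_supp hχ hχsupp h)).1
  have hj' : N ≤ j := by simpa using hj
  have : (2 : ℝ) ^ N ≤ 2 ^ j := pow_le_pow_right₀ (by norm_num) hj'
  linarith

lemma aux_chij_zero (hχ : Continuous χ) (hχsupp : tsupport χ = Icc (1 / 2 : ℝ) 2)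
    (hχsum : ∀ ξ : ℝ, 1 ≤ ξ → ∑' j : ℕ, χ ((2 : ℝ) ^ (-(j : ℝ)) * ξ) = 1) {ξ : ℝ} (h : 1 ≤ ξ) :
    chij χ 0 ξ = χ ξ := by
  have h1 := hχsum ξ h
  simp_rw [aux_two_pow] at h1
  rw [(aux_summable hχ hχsupp ξ).tsum_eq_zero_add] at h1
  have h2 : chij χ 0 ξ = 1 - ∑' j : ℕ, χ (((2 : ℝ) ^ (j + 1))⁻¹ * ξ) := by
    simp only [chij]
    congr 2
    ext j
    have := aux_two_pow (j + 1)
    push_cast at this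
    rw [this]
  rw [h2, ← h1]
  simp

lemma aux_chij_zero_zero (hχ : Continuous χ) (hχsupp : tsupport χ = Icc (1 / 2 : ℝ) 2) :
    chij χ 0 0 = 1 := by
  have : χ 0 = 0 := by
    by_contra h
    have := (aux_chi_supp hχ hχsupp h).1
    norm_num at this
  simp [chij, this]

lemma aux_chij (hχ : Continuous χ) (hχsupp : tsupport χ = Icc (1 / 2 : ℝ) 2)
    (hχsum : ∀ ξ : ℝ, 1 ≤ ξ → ∑' j : ℕ, χ ((2 : ℝ) ^ (-(j : ℝ)) * ξ) = 1) {ξ : ℝ} (h : 1 ≤ ξ)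
    (j : ℕ) : chij χ j ξ = χ (((2 : ℝ) ^ j)⁻¹ * ξ) := by
  cases j with
  | zero => rw [aux_chij_zero hχ hχsupp hχsum h]; simp
  | succ j => exact aux_chij_succ j ξ

lemma aux_one_le {n : ℤ} (hn : n ≠ 0) : (1 : ℝ) ≤ |(n : ℝ)| := by
  exact_mod_cast Int.one_le_abs hn

/-- size of `n` on the support of the cutoff -/
lemma aux_size (hχ : Continuous χ) (hχsupp : tsupport χ = Icc (1 / 2 : ℝ) 2)
    (hχsum : ∀ ξ : ℝ, 1 ≤ ξ → ∑' j : ℕ, χ ((2 : ℝ) ^ (-(j : ℝ)) * ξ) = 1) {n : ℤ} {j : ℕ}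
    (h : chij χ j |(n : ℝ)| ≠ 0) :
    |(n : ℝ)| < 2 * 2 ^ j ∧ (4 : ℝ) ^ j ≤ 5 * (1 + (n : ℝ) ^ 2) := by
  have h4 : (4 : ℝ) ^ j = (2 ^ j) ^ 2 := by rw [← pow_mul, mul_comm, pow_mul]; norm_num
  by_cases hn : n = 0
  · subst hn
    cases j with
    | zero => norm_num
    | succ j =>
      exfalso
      apply h
      rw [aux_chij_succ]
      by_contra h'
      have := (aux_chi_supp hχ hχsupp h').1
      norm_num at this
  · rw [aux_chij hχ hχsupp hχsum (aux_one_le hn)] at h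
    obtain ⟨h1, h2⟩ := aux_bound (aux_chi_supp hχ hχsupp h)
    refine ⟨h2, ?_⟩
    rw [h4, ← sq_abs (n : ℝ)]
    have hp : (0 : ℝ) < 2 ^ j := by positivity
    nlinarith

lemma aux_exists (hχ : Continuous χ) (hχsupp : tsupport χ = Icc (1 / 2 : ℝ) 2)
    (hχsum : ∀ ξ : ℝ, 1 ≤ ξ → ∑' j : ℕ, χ ((2 : ℝ) ^ (-(j : ℝ)) * ξ) = 1) (n : ℤ) :
    ∃ j, 1 / 2 ≤ chij χ j |(n : ℝ)| := by
  by_cases hn : n = 0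
  · subst hn
    refine ⟨0, ?_⟩
    simp only [Int.cast_zero, abs_zero]
    rw [aux_chij_zero_zero hχ hχsupp]
    norm_num
  · have h1 := aux_one_le hn
    by_contra! hcon
    simp_rw [aux_chij hχ hχsupp hχsum h1] at hcon
    obtain ⟨k, hk1, hk2⟩ := exists_nat_pow_near h1 (one_lt_two)
    have hs := hχsum _ h1
    simp_rw [aux_two_pow] at hs
    rw [tsum_eq_sum (s := {k, k + 1}), Finset.sum_pair (by simp)] at hs
    · linarith [hcon k, hcon (k + 1)]
    · intro j hj
      by_contra h
      obtain ⟨h3, h4⟩ := aux_bound (aux_chi_supp hχ hχsupp h)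
      have e1 : (2 : ℝ) ^ k < 2 ^ (j + 1) := by rw [pow_succ]; linarith
      have e2 : (2 : ℝ) ^ j < 2 ^ (k + 2) := by rw [pow_succ]; linarith
      have e1' := (pow_lt_pow_iff_right₀ (one_lt_two (α := ℝ))).1 e1
      have e2' := (pow_lt_pow_iff_right₀ (one_lt_two (α := ℝ))).1 e2
      simp at hj
      omega

end chi

lemma aux_rpow {x r : ℝ} (h1 : 1 / 5 ≤ x) (h2 : x ≤ 5) : x ^ r ≤ 5 ^ |r| := by
  have hx : 0 < x := by linarith
  rcases le_total 0 r with h | h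
  · rw [abs_of_nonneg h]
    exact Real.rpow_le_rpow hx.le h2 h
  · rw [abs_of_nonpos h]
    have : x ^ r = (x⁻¹) ^ (-r) := by
      rw [Real.inv_rpow hx.le, Real.rpow_neg hx.le, inv_inv]
    rw [this]
    refine Real.rpow_le_rpow (by positivity) ?_ (by linarith)
    rw [inv_le_comm₀ hx (by norm_num)]
    linarith

/-- If `f ∈ B^{r₁}_{1,∞}(T) ∩ B^{r₂}_{∞,∞}(T)`, then `f ∈ H^r(T)` for every
`r < (r₁ + r₂)/2`, where `H^r(T)` is the `L²`-Sobolev space: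
`Σ_n (1+n²)^r |f̂(n)|² < ∞`. -/
theorem besov_interpolation_sobolev (χ : ℝ → ℝ)
    (hχ : ContDiff ℝ (⊤ : ℕ∞) χ) (hχ01 : ∀ ξ, χ ξ ∈ Icc (0 : ℝ) 1)
    (hχsupp : tsupport χ = Icc (1 / 2 : ℝ) 2)
    (hχsum : ∀ ξ : ℝ, 1 ≤ ξ → ∑' j : ℕ, χ ((2 : ℝ) ^ (-(j : ℝ)) * ξ) = 1)
    (r₁ r₂ : ℝ) (f : ℝ → ℂ) (hf : Continuous f) (hper : ∀ x : ℝ, f (x + 2 * π) = f x)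
    (hB1 : ∃ C : ℝ, ∀ j : ℕ,
      (2 : ℝ) ^ (r₁ * j) * (∫ x in (-π : ℝ)..π, ‖LPproj χ f j x‖) ≤ C)
    (hBinf : ∃ C : ℝ, ∀ (j : ℕ) (x : ℝ), (2 : ℝ) ^ (r₂ * j) * ‖LPproj χ f j x‖ ≤ C)
    (r : ℝ) (hr : r < (r₁ + r₂) / 2) :
    Summable fun n : ℤ => (1 + (n : ℝ) ^ 2) ^ r * ‖fc f n‖ ^ 2 := by
  have hc : Continuous χ := hχ.continuous
  obtain ⟨C₁, hC₁⟩ := hB1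
  obtain ⟨C₂, hC₂⟩ := hBinf
  set S : ℕ → Finset ℤ := fun j => Finset.Icc (-(2 * 2 ^ j)) (2 * 2 ^ j) with hS
  have hmem : ∀ (j : ℕ) (n : ℤ), n ∉ S j → chij χ j |(n : ℝ)| = 0 := by
    intro j n hn
    by_contra h
    apply hn
    have := (aux_size hc hχsupp hχsum h).1
    have h2 : |n| < 2 * 2 ^ j := by exact_mod_cast this
    rw [abs_lt] at h2
    simp only [hS, Finset.mem_Icc]
    exact ⟨h2.1.le, h2.2.le⟩
  set b : ℕ → ℤ → ℂ := fun j n => ((chij χ j |(n : ℝ)| : ℝ) : ℂ) * fc f n with hb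
  have hb0 : ∀ (j : ℕ) (n : ℤ), n ∉ S j → b j n = 0 := by
    intro j n hn
    simp [hb, hmem j n hn]
  have hLP : ∀ j x, LPproj χ f j x = ∑ n ∈ S j, b j n * Complex.exp (Complex.I * n * x) := by
    intro j x
    unfold LPproj
    refine tsum_eq_sum fun n hn => ?_
    rw [hmem j n hn]
    simp
  have hC₂0 : 0 ≤ C₂ := le_trans (by positivity) (hC₂ 0 0)
  have hpars : ∀ j, ∑ n ∈ S j, ‖b j n‖ ^ 2 ≤ C₁ * C₂ * (2 : ℝ) ^ (-(r₁ + r₂) * j) := by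
    intro j
    have hP := aux_parseval (S j) (b j)
    simp_rw [← hLP] at hP
    have hcont : Continuous fun x => LPproj χ f j x := by
      simp_rw [hLP]
      fun_prop
    have hp1 : 0 < (2 : ℝ) ^ (r₁ * j) := by positivity
    have hp2 : 0 < (2 : ℝ) ^ (r₂ * j) := by positivity
    have hI1 : ∫ x in (-π : ℝ)..π, ‖LPproj χ f j x‖ ≤ C₁ / (2 : ℝ) ^ (r₁ * j) := by
      rw [le_div_iff₀ hp1, mul_comm]
      exact hC₁ j
    have hI2 : ∫ x in (-π : ℝ)..π, ‖LPproj χ f j x‖ ^ 2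
        ≤ ∫ x in (-π : ℝ)..π, C₂ / (2 : ℝ) ^ (r₂ * j) * ‖LPproj χ f j x‖ := by
      refine intervalIntegral.integral_mono_on (by linarith [pi_pos])
        (Continuous.intervalIntegrable (by fun_prop) _ _)
        (Continuous.intervalIntegrable (by fun_prop) _ _) fun x _ => ?_
      rw [sq]
      refine mul_le_mul_of_nonneg_right ?_ (norm_nonneg _)
      rw [le_div_iff₀ hp2, mul_comm]
      exact hC₂ j x
    rw [intervalIntegral.integral_const_mul, hP] at hI2
    have hI3 := mul_le_mul_of_nonneg_left hI1 (div_nonneg hC₂0 hp2.le)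
    have e : C₂ / (2 : ℝ) ^ (r₂ * j) * (C₁ / (2 : ℝ) ^ (r₁ * j))
        = C₁ * C₂ * (2 : ℝ) ^ (-(r₁ + r₂) * j) := by
      have : -(r₁ + r₂) * j = -(r₂ * j) + -(r₁ * j) := by ring
      rw [this, Real.rpow_add (by norm_num), Real.rpow_neg (by norm_num),
        Real.rpow_neg (by norm_num)]
      field_simp
    rw [e] at hI3
    have hs : 0 ≤ ∑ n ∈ S j, ‖b j n‖ ^ 2 := Finset.sum_nonneg fun _ _ => by positivity
    nlinarith [pi_gt_three]
  set g : ℕ × ℤ → ℝ := fun p => (2 : ℝ) ^ (2 * r * p.1) * ‖b p.1 p.2‖ ^ 2 with hg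
  have hg0 : 0 ≤ g := fun p => by simp only [hg, Pi.zero_apply]; positivity
  have hgsum : Summable g := by
    rw [summable_prod_of_nonneg hg0]
    have hz : ∀ (j : ℕ) (n : ℤ), n ∉ S j → g (j, n) = 0 := by
      intro j n hn
      simp [hg, hb0 j n hn]
    refine ⟨fun j => summable_of_ne_finset_zero (s := S j) (hz j), ?_⟩
    have hq : (2 : ℝ) ^ (2 * r - (r₁ + r₂)) < 1 :=
      Real.rpow_lt_one_of_one_lt_of_neg (by norm_num) (by linarith)
    refine Summable.of_nonneg_of_le (fun j => tsum_nonneg fun n => hg0 _) (fun j => ?_)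
      ((summable_geometric_of_lt_one (by positivity) hq).mul_left (C₁ * C₂))
    rw [tsum_eq_sum (s := S j) (hz j)]
    simp only [hg]
    rw [← Finset.mul_sum]
    refine (mul_le_mul_of_nonneg_left (hpars j) (by positivity)).trans (le_of_eq ?_)
    rw [← Real.rpow_mul_natCast (by norm_num), mul_left_comm, ← Real.rpow_add (by norm_num)]
    congr 2
    ring
  have hsw : Summable fun p : ℤ × ℕ => g (p.2, p.1) := hgsum.comp_injective
    (i := Prod.swap) Prod.swap_injective
  have hfib : ∀ n : ℤ, Summable fun j : ℕ => g (j, n) := fun n => hsw.prod_factor n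
  have hsum := hsw.prod
  refine Summable.of_nonneg_of_le (fun n => by positivity) (fun n => ?_)
    (hsum.mul_left (4 * 5 ^ |r|))
  obtain ⟨j, hj⟩ := aux_exists hc hχsupp hχsum n
  have hle : g (j, n) ≤ ∑' j, g (j, n) := (hfib n).le_tsum j fun i _ => hg0 _
  refine le_trans ?_ (mul_le_mul_of_nonneg_left hle (by positivity))
  obtain ⟨hs1, hs2⟩ := aux_size hc hχsupp hχsum (n := n) (j := j) (by linarith)
  have h4 : (4 : ℝ) ^ j = (2 ^ j) ^ 2 := by rw [← pow_mul, mul_comm, pow_mul]; norm_num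
  have h4p : (0 : ℝ) < 4 ^ j := by positivity
  have h41 : (1 : ℝ) ≤ 4 ^ j := one_le_pow₀ (by norm_num)
  have hup : 1 + (n : ℝ) ^ 2 ≤ 5 * 4 ^ j := by
    have : (n : ℝ) ^ 2 ≤ (2 * 2 ^ j) ^ 2 := by
      rw [← sq_abs (n : ℝ)]
      exact pow_le_pow_left₀ (abs_nonneg _) hs1.le 2
    rw [mul_pow, ← h4] at this
    linarith
  have hw : (1 + (n : ℝ) ^ 2) ^ r ≤ 5 ^ |r| * (2 : ℝ) ^ (2 * r * j) := by
    have h5 : ((1 + (n : ℝ) ^ 2) / 4 ^ j) ^ r ≤ 5 ^ |r| := by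
      apply aux_rpow
      · rw [le_div_iff₀ h4p]; linarith
      · rw [div_le_iff₀ h4p]; linarith
    rw [Real.div_rpow (by positivity) h4p.le, div_le_iff₀ (by positivity)] at h5
    have h6 : ((4 : ℝ) ^ j) ^ r = (2 : ℝ) ^ (2 * r * j) := by
      rw [h4, ← pow_mul, ← Real.rpow_natCast, ← Real.rpow_mul (by norm_num)]
      congr 1
      push_cast
      ring
    rwa [h6] at h5
  have hbn : ‖fc f n‖ ^ 2 ≤ 4 * ‖b j n‖ ^ 2 := by
    have : ‖b j n‖ = chij χ j |(n : ℝ)| * ‖fc f n‖ := by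
      simp only [hb, norm_mul, Complex.norm_real]
      rw [Real.norm_of_nonneg (by linarith)]
    have h7 : ‖fc f n‖ ≤ 2 * ‖b j n‖ := by
      rw [this]
      nlinarith [norm_nonneg (fc f n)]
    nlinarith [norm_nonneg (fc f n)]
  calc _ ≤ (5 ^ |r| * (2 : ℝ) ^ (2 * r * j)) * (4 * ‖b j n‖ ^ 2) :=
        mul_le_mul hw hbn (by positivity) (by positivity)
    _ = _ := by simp only [hg]; ring
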